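/- Yee's sufficient TVD criterion for symmetric-type fluxes (the criterion used to prove Theorem 1): Let θ ∈ [0,1) and suppose λ|a| < 1/(1−θ); set K = 2/(λ(1−θ)|a|) − 2. To each grid function w and each interface assign a limiter value Q_{j+1/2}(w) and define the flux f̂_{j+1/2}(w) = (1/2)[a(w_j + w_{j+1}) − |a|(1 − Q_{j+1/2}(w))·Δ_{j+1/2}w]. Assume that for each w ∈ {u, v} and all j: (i) 0 ≤ Q_{j+1/2}(w) ≤ 2; (ii) Q_{j+1/2}(w) = 0 whenever Δ_{j+1/2}w·Δ_{j+3/2}w ≤ 0 or Δ_{j+1/2}w·Δ_{j−1/2}w ≤ 0; (iii) Q_{j+1/2}(w)·Δ_{j+1/2}w / Δ_{j+3/2}w ≤ K whenever Δ_{j+3/2}w ≠ 0, and Q_{j+1/2}(w)·Δ_{j+1/2}w / Δ_{j−1/2}w ≤ K whenever Δ_{j−1/2}w ≠ 0. If u and v satisfy the θ-scheme v_j = u_j − λ(1−θ)[f̂_{j+1/2}(u) − f̂_{j−1/2}(u)] − λθ[f̂_{j+1/2}(v) − f̂_{j−1/2}(v)] for all j ∈ ℤ (with TV(v) < ∞ when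 θ > 0), then TV(v) ≤ TV(u). -/

import Mathlib

/-- Abstract Harten-type lemma on increments. -/
theorem harten_aux (e : ℤ ≃ ℤ) (p q b c : ℤ → ℝ) (hb : ∀ j, 0 ≤ b j)
    (hc0 : ∀ j, 0 ≤ c j) (hc1 : ∀ j, c j ≤ 1)
    (hS : ∑' j, ENNReal.ofReal (b j * |p j|) ≠ ⊤)
    (h : ∀ j, p j + b j * p j - b (e j) * p (e j) = q j - c j * q j + c (e j) * q (e j)) :
    ∑' j, ENNReal.ofReal |p j| ≤ ∑' j, ENNReal.ofReal |q j| := by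
  have key : ∀ j, |p j| + b j * |p j| ≤
      ((1 - c j) * |q j| + c (e j) * |q (e j)|) + b (e j) * |p (e j)| := by
    intro j
    have h1 : (1 + b j) * p j =
        ((1 - c j) * q j + c (e j) * q (e j)) + b (e j) * p (e j) := by
      linarith [h j]
    have h2 := congrArg abs h1
    rw [abs_mul, abs_of_nonneg (by linarith [hb j] : 0 ≤ 1 + b j)] at h2
    have h3 := abs_add_three ((1 - c j) * q j) (c (e j) * q (e j)) (b (e j) * p (e j))
    rw [abs_mul, abs_mul, abs_mul, abs_of_nonneg (hc0 _), abs_of_nonneg (hb _),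
      abs_of_nonneg (by linarith [hc1 j] : 0 ≤ 1 - c j)] at h3
    linarith
  have n1 : ∀ j, 0 ≤ b j * |p j| := fun j => mul_nonneg (hb j) (abs_nonneg _)
  have n2 : ∀ j, 0 ≤ c j * |q j| := fun j => mul_nonneg (hc0 j) (abs_nonneg _)
  have n3 : ∀ j, 0 ≤ (1 - c j) * |q j| :=
    fun j => mul_nonneg (by linarith [hc1 j]) (abs_nonneg _)
  have key2 : ∀ j, ENNReal.ofReal |p j| + ENNReal.ofReal (b j * |p j|) ≤
      (ENNReal.ofReal ((1 - c j) * |q j|) + ENNReal.ofReal (c (e j) * |q (e j)|))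
        + ENNReal.ofReal (b (e j) * |p (e j)|) := by
    intro j
    rw [← ENNReal.ofReal_add (abs_nonneg _) (n1 _), ← ENNReal.ofReal_add (n3 _) (n2 _),
      ← ENNReal.ofReal_add (add_nonneg (n3 _) (n2 _)) (n1 _)]
    exact ENNReal.ofReal_le_ofReal (key j)
  have key3 := ENNReal.tsum_le_tsum key2
  rw [ENNReal.tsum_add, ENNReal.tsum_add, ENNReal.tsum_add,
    Equiv.tsum_eq e (fun j => ENNReal.ofReal (b j * |p j|)),
    Equiv.tsum_eq e (fun j => ENNReal.ofReal (c j * |q j|)),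
    ← ENNReal.tsum_add (f := fun j => ENNReal.ofReal ((1 - c j) * |q j|))] at key3
  have key4 := (ENNReal.add_le_add_iff_right hS).1 key3
  refine key4.trans (le_of_eq ?_)
  congr 1
  ext1 j
  rw [← ENNReal.ofReal_add (n3 _) (n2 _)]
  congr 1
  ring

/-- One-interface coefficient. -/
theorem coef_aux (A K q q' d d' : ℝ) (hA : 0 ≤ A) (hq : q ≤ 2) (hq0 : 0 ≤ q) (hq0' : 0 ≤ q')
    (hK0 : 0 ≤ K) (hz : d * d' ≤ 0 → q' = 0) (hK : d ≠ 0 → q' * d' / d ≤ K) :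
    ∃ c, 0 ≤ c ∧ c ≤ A * (1 + K / 2) ∧ A * (d - q * d / 2 + q' * d' / 2) = c * d := by
  by_cases hd : d = 0
  · refine ⟨0, le_rfl, by positivity, ?_⟩
    have := hz (by simp [hd])
    simp [hd, this]
  · have hr : 0 ≤ q' * d' / d := by
      rcases le_or_gt (d * d') 0 with h | h
      · simp [hz h]
      · have : q' * d' / d = q' * (d * d') / d ^ 2 := by field_simp
        rw [this]; positivity
    refine ⟨A * (1 - q / 2 + q' * d' / d / 2), mul_nonneg hA (by linarith),
      mul_le_mul_of_nonneg_left (by linarith [hK hd]) hA, ?_⟩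
    field_simp


/-- Total variation of a grid function `u : ℤ → ℝ`, a value in `[0, ∞]`. -/
noncomputable def TV (u : ℤ → ℝ) : ENNReal :=
  ∑' j : ℤ, ENNReal.ofReal |u (j + 1) - u j|

/-- Symmetric-type numerical flux with limiter `Q`:
`f̂_{j+1/2}(w) = (1/2)[a(w_j + w_{j+1}) − |a|(1 − Q_{j+1/2}(w))·Δ_{j+1/2}w]`. -/
noncomputable def yeeFlux (a : ℝ) (Q : (ℤ → ℝ) → ℤ → ℝ) (w : ℤ → ℝ) (j : ℤ) : ℝ :=
  (1 / 2) * (a * (w j + w (j + 1)) - |a| * (1 - Q w j) * (w (j + 1) - w j))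

/-- Yee's sufficient TVD criterion for symmetric-type fluxes: with `θ ∈ [0,1)`,
`λ|a| < 1/(1−θ)`, and `K = 2/(λ(1−θ)|a|) − 2`, if for each `w ∈ {u, v}` and all `j` the
limiter satisfies `0 ≤ Q_{j+1/2}(w) ≤ 2`, vanishes when neighbouring gradients have a
nonpositive product, and obeys the bounds `Q_{j+1/2}(w)·Δ_{j+1/2}w/Δ_{j±...}w ≤ K`, then
any θ-scheme solution `v` from `u` (with `TV(v) < ∞` when `θ > 0`) has `TV(v) ≤ TV(u)`. -/
theorem yee_tvd_criterion (a lam θ : ℝ) (ha : a ≠ 0) (hlam : 0 < lam)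
    (hθ0 : 0 ≤ θ) (hθ1 : θ < 1) (hCFL : lam * |a| < 1 / (1 - θ))
    (Q : (ℤ → ℝ) → ℤ → ℝ) (u v : ℤ → ℝ) (hfin : 0 < θ → TV v < ⊤)
    (hQ : ∀ w : ℤ → ℝ, (w = u ∨ w = v) → ∀ j : ℤ,
      (0 ≤ Q w j ∧ Q w j ≤ 2) ∧
      (((w (j + 1) - w j) * (w (j + 2) - w (j + 1)) ≤ 0 ∨
        (w (j + 1) - w j) * (w j - w (j - 1)) ≤ 0) → Q w j = 0) ∧
      ((w (j + 2) - w (j + 1) ≠ 0 →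
          Q w j * (w (j + 1) - w j) / (w (j + 2) - w (j + 1))
            ≤ 2 / (lam * (1 - θ) * |a|) - 2) ∧
       (w j - w (j - 1) ≠ 0 →
          Q w j * (w (j + 1) - w j) / (w j - w (j - 1))
            ≤ 2 / (lam * (1 - θ) * |a|) - 2)))
    (hscheme : ∀ j : ℤ, v j = u j
      - lam * (1 - θ) * (yeeFlux a Q u j - yeeFlux a Q u (j - 1))
      - lam * θ * (yeeFlux a Q v j - yeeFlux a Q v (j - 1))) :
    TV v ≤ TV u := by
  have hA : 0 < |a| := abs_pos.2 ha
  have h1θ : 0 < 1 - θ := by linarith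
  have hpos : 0 < lam * (1 - θ) * |a| := by positivity
  have hlt : lam * (1 - θ) * |a| < 1 := by
    rw [lt_div_iff₀ h1θ] at hCFL
    linarith
  obtain ⟨K, hKdef⟩ : ∃ K, K = 2 / (lam * (1 - θ) * |a|) - 2 := ⟨_, rfl⟩
  have hK0 : 0 ≤ K := by
    rw [hKdef, sub_nonneg, le_div_iff₀ hpos]
    linarith
  have hM : lam * (1 - θ) * (|a| * (1 + K / 2)) = 1 := by
    rw [hKdef]; field_simp; ring
  rw [← hKdef] at hQ
  -- reduction to the coefficient form
  have main : ∀ (e : ℤ ≃ ℤ) (cu cv : ℤ → ℝ),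
      (∀ j, 0 ≤ cu j) → (∀ j, cu j ≤ |a| * (1 + K / 2)) →
      (∀ j, 0 ≤ cv j) → (∀ j, cv j ≤ |a| * (1 + K / 2)) →
      (∀ j, (v (j + 1) - v j) + lam * θ * (cv j * (v (j + 1) - v j))
          - lam * θ * (cv (e j) * (v (e j + 1) - v (e j)))
        = (u (j + 1) - u j) - lam * (1 - θ) * (cu j * (u (j + 1) - u j))
          + lam * (1 - θ) * (cu (e j) * (u (e j + 1) - u (e j)))) → TV v ≤ TV u := by
    intro e cu cv hu0 hu1 hv0 hv1 h
    refine harten_aux e (fun j => v (j + 1) - v j) (fun j => u (j + 1) - u j)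
      (fun j => lam * θ * cv j) (fun j => lam * (1 - θ) * cu j) ?_ ?_ ?_ ?_ ?_
    · intro j; have := hv0 j; positivity
    · intro j; have := hu0 j; positivity
    · intro j
      refine le_trans ?_ hM.le
      exact mul_le_mul_of_nonneg_left (hu1 j) (mul_pos hlam h1θ).le
    · rcases hθ0.eq_or_lt with h0 | h0
      · simp [← h0]
      · refine ne_top_of_le_ne_top (b := ENNReal.ofReal (lam * θ * (|a| * (1 + K / 2))) * TV v)
          (ENNReal.mul_ne_top ENNReal.ofReal_ne_top (hfin h0).ne) ?_
        unfold TV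
        rw [← ENNReal.tsum_mul_left]
        refine ENNReal.tsum_le_tsum fun j => ?_
        rw [← ENNReal.ofReal_mul (by positivity)]
        refine ENNReal.ofReal_le_ofReal ?_
        refine mul_le_mul_of_nonneg_right ?_ (abs_nonneg _)
        exact mul_le_mul_of_nonneg_left (hv1 j) (by positivity)
    · intro j
      have := h j
      linarith
  rcases lt_or_gt_of_ne ha with hneg | hpos'
  · have hab : |a| = -a := abs_of_neg hneg
    have hc : ∀ w : ℤ → ℝ, (w = u ∨ w = v) → ∀ j : ℤ, ∃ c, 0 ≤ c ∧ c ≤ |a| * (1 + K / 2) ∧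
        yeeFlux a Q w j - yeeFlux a Q w (j - 1) = -(c * (w (j + 1) - w j)) := by
      intro w hw j
      obtain ⟨⟨q0, q2⟩, -, -, -⟩ := hQ w hw j
      obtain ⟨⟨r0, r2⟩, rz, rK, -⟩ := hQ w hw (j - 1)
      have e1 : j - 1 + 1 = j := by ring
      have e2 : j - 1 + 2 = j + 1 := by ring
      rw [e1, e2] at rz rK
      obtain ⟨c, c0, c1, c2⟩ := coef_aux |a| K (Q w j) (Q w (j - 1)) (w (j + 1) - w j)
        (w j - w (j - 1)) hA.le q2 q0 r0 hK0 (fun h => rz (Or.inl (by linarith))) rK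
      refine ⟨c, c0, c1, ?_⟩
      rw [← c2]
      simp only [yeeFlux, e1, hab]
      ring
    choose cu hu0 hu1 hu using hc u (Or.inl rfl)
    choose cv hv0 hv1 hv using hc v (Or.inr rfl)
    refine main (Equiv.addRight 1) cu cv hu0 hu1 hv0 hv1 ?_
    intro j
    have s1 := hscheme j
    have s2 := hscheme (j + 1)
    rw [hu, hv] at s1 s2
    simp only [Equiv.coe_addRight]
    linarith
  · have hab : |a| = a := abs_of_pos hpos'
    have hc : ∀ w : ℤ → ℝ, (w = u ∨ w = v) → ∀ j : ℤ, ∃ c, 0 ≤ c ∧ c ≤ |a| * (1 + K / 2) ∧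
        yeeFlux a Q w (j + 1) - yeeFlux a Q w j = c * (w (j + 1) - w j) := by
      intro w hw j
      obtain ⟨⟨q0, q2⟩, -, -, -⟩ := hQ w hw j
      obtain ⟨⟨r0, r2⟩, rz, -, rK⟩ := hQ w hw (j + 1)
      have e1 : j + 1 - 1 = j := by ring
      rw [e1] at rz rK
      obtain ⟨c, c0, c1, c2⟩ := coef_aux |a| K (Q w j) (Q w (j + 1)) (w (j + 1) - w j)
        (w (j + 1 + 1) - w (j + 1)) hA.le q2 q0 r0 hK0 (fun h => rz (Or.inr (by linarith))) rK
      refine ⟨c, c0, c1, ?_⟩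
      rw [← c2]
      simp only [yeeFlux, hab]
      ring
    choose cu hu0 hu1 hu using hc u (Or.inl rfl)
    choose cv hv0 hv1 hv using hc v (Or.inr rfl)
    refine main (Equiv.subRight 1) cu cv hu0 hu1 hv0 hv1 ?_
    intro j
    have s1 := hscheme j
    have s2 := hscheme (j + 1)
    have hu' := hu (j - 1)
    have hv' := hv (j - 1)
    have e1 : j + 1 - 1 = j := by ring
    have e2 : j - 1 + 1 = j := by ring
    rw [e1, hu, hv] at s2
    rw [e2] at hu' hv'
    rw [hu', hv'] at s1
    simp only [Equiv.subRight_apply, e2]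
    linarith
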